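/- arXiv:2306.03888 — 2 statements merged into one kernel-verified Lean document; each statement's English description precedes it below -/
import Mathlib

section
/- For every n ≥ 2: the coefficient of the monomial X in α_n equals 1, the coefficient of X^n in α_n equals 1, the coefficient of Y^n in α_n equals 1, and for every k with 0 ≤ k < n the coefficient of Y^k in α_n equals 0. -/
open MvPolynomial

/-- The 2×2 matrix over `𝔽₂[X,Y]` with rows `(X+Y, 1)` and `(X, 1)`. -/
noncomputable def stmtM : Matrix (Fin 2) (Fin 2) (MvPolynomial (Fin 2) (ZMod 2)) :=
  !![X 0 + X 1, 1; X 0, 1]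

/-- `α_n` is the `(1,1)` entry of the `n`-th power of `stmtM`. -/
noncomputable def stmtAlpha (n : ℕ) : MvPolynomial (Fin 2) (ZMod 2) :=
  (stmtM ^ n) 0 0

/-!
The coefficients of the pure powers of one variable in a polynomial are unchanged by setting the
other variables to `0`. At `X = 0` the matrix becomes upper triangular with diagonal `(Y, 1)`, so
`α_n` becomes `Y ^ n`. At `Y = 0` it becomes the rank-one matrix with both rows `(X, 1)`, whose
`(n + 1)`-st power is `(X + 1) ^ n` times itself, so `α_{n+1}` becomes `(X + 1) ^ n * X`.
-/

section MatrixPowers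

variable {m R : Type*} [Fintype m]

theorem mul_apply_self_of_isUpperTriangular [LinearOrder m] [NonUnitalNonAssocSemiring R]
    {M N : Matrix m m R} (hM : M.IsUpperTriangular) (hN : N.IsUpperTriangular) (i : m) :
    (M * N) i i = M i i * N i i := by
  rw [Matrix.mul_apply]
  refine Fintype.sum_eq_single i fun j hji => ?_
  rcases hji.lt_or_gt with hlt | hgt
  · rw [hM hlt, zero_mul]
  · rw [hN hgt, mul_zero]

theorem pow_apply_self_of_isUpperTriangular [LinearOrder m] [Semiring R] {M : Matrix m m R}
    (hM : M.IsUpperTriangular) (n : ℕ) (i : m) : (M ^ n) i i = M i i ^ n := by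
  induction n with
  | zero => simp
  | succ n ih => rw [pow_succ, mul_apply_self_of_isUpperTriangular (hM.pow n) hM, ih, pow_succ]

theorem vecMulVec_pow_succ [DecidableEq m] [CommSemiring R] (u v : m → R) (n : ℕ) :
    Matrix.vecMulVec u v ^ (n + 1) = (v ⬝ᵥ u) ^ n • Matrix.vecMulVec u v := by
  induction n with
  | zero => simp
  | succ n ih =>
    rw [pow_succ, ih, Matrix.smul_mul, Matrix.vecMulVec_mul_vecMulVec, Matrix.vecMulVec_smul,
      smul_smul, pow_succ]

end MatrixPowers

section RestrictToAxis

variable {σ R : Type*} [DecidableEq σ] [CommSemiring R]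

/-- Restriction of a polynomial to the `i`-th coordinate axis: the variable `X i` becomes the
variable of `R[X]`, and all other variables are set to `0`. -/
noncomputable def restrictToAxis (i : σ) : MvPolynomial σ R →ₐ[R] Polynomial R :=
  aeval (Pi.single i Polynomial.X)

theorem restrictToAxis_X_self (i : σ) :
    restrictToAxis i (X i : MvPolynomial σ R) = Polynomial.X := by
  simp [restrictToAxis]

theorem restrictToAxis_X_of_ne {i j : σ} (h : j ≠ i) :
    restrictToAxis i (X j : MvPolynomial σ R) = 0 := by
  simp [restrictToAxis, h]

theorem coeff_restrictToAxis (i : σ) (p : MvPolynomial σ R) (k : ℕ) :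
    (restrictToAxis i p).coeff k = coeff (Finsupp.single i k) p := by
  induction p using MvPolynomial.induction_on generalizing k with
  | C a =>
    simp [restrictToAxis, Polynomial.coeff_C, coeff_C, eq_comm (a := (0 : σ →₀ ℕ))]
  | add p q hp hq => simp only [map_add, Polynomial.coeff_add, coeff_add, hp, hq]
  | mul_X p j hp =>
    rw [map_mul, coeff_mul_X']
    obtain rfl | hji := eq_or_ne j i
    · rw [restrictToAxis_X_self]
      cases k with
      | zero => simp
      | succ k => simp [hp]
    · simp [restrictToAxis_X_of_ne hji, hji.symm]

end RestrictToAxis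

section AlphaMatrix

variable (R : Type*) [CommSemiring R]

/-- The matrix `stmtM` with coefficients in an arbitrary commutative semiring; `X 0` and `X 1`
stand for `X` and `Y`. -/
noncomputable def alphaMatrix : Matrix (Fin 2) (Fin 2) (MvPolynomial (Fin 2) R) :=
  !![X 0 + X 1, 1; X 0, 1]

/-- The polynomial `α_n` with coefficients in an arbitrary commutative semiring; `stmtAlpha` is the
case of `ZMod 2`. -/
noncomputable def alpha (n : ℕ) : MvPolynomial (Fin 2) R :=
  (alphaMatrix R ^ n) 0 0

theorem map_alpha {S : Type*} [CommSemiring S] [Algebra R S] (f : MvPolynomial (Fin 2) R →ₐ[R] S)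
    (n : ℕ) :
    f (alpha R n) = (!![f (X 0) + f (X 1), 1; f (X 0), 1] ^ n) 0 0 := by
  have map_alphaMatrix :
      f.mapMatrix (alphaMatrix R) = !![f (X 0) + f (X 1), 1; f (X 0), 1] := by
    ext i j
    fin_cases i <;> fin_cases j <;> simp [alphaMatrix]
  rw [← map_alphaMatrix, ← map_pow]
  rfl

theorem restrictToAxis_one_alpha (n : ℕ) :
    restrictToAxis 1 (alpha R n) = Polynomial.X ^ n := by
  have isUpperTriangular :
      (!![Polynomial.X, 1; 0, 1] : Matrix _ _ (Polynomial R)).IsUpperTriangular := by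
    intro i j hji
    fin_cases i <;> fin_cases j <;> simp_all
  calc restrictToAxis 1 (alpha R n) = (!![Polynomial.X, 1; 0, 1] ^ n) 0 0 := by
        simpa [restrictToAxis_X_self, restrictToAxis_X_of_ne]
          using map_alpha R (restrictToAxis 1) n
    _ = Polynomial.X ^ n := pow_apply_self_of_isUpperTriangular isUpperTriangular n 0

theorem restrictToAxis_zero_alpha_succ (n : ℕ) :
    restrictToAxis 0 (alpha R (n + 1)) = (Polynomial.X + 1) ^ n * Polynomial.X := by
  have eq_vecMulVec : (!![Polynomial.X, 1; Polynomial.X, 1] : Matrix _ _ (Polynomial R)) =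
      Matrix.vecMulVec ![1, 1] ![Polynomial.X, 1] := by
    ext1 i j
    fin_cases i <;> fin_cases j <;> simp [Matrix.vecMulVec_apply]
  calc restrictToAxis 0 (alpha R (n + 1))
      = (!![Polynomial.X, 1; Polynomial.X, 1] ^ (n + 1)) 0 0 := by
        simpa [restrictToAxis_X_self, restrictToAxis_X_of_ne]
          using map_alpha R (restrictToAxis 0) (n + 1)
    _ = (Polynomial.X + 1) ^ n * Polynomial.X := by
        rw [eq_vecMulVec, vecMulVec_pow_succ]
        simp

theorem coeff_single_one_alpha (n k : ℕ) :
    coeff (Finsupp.single 1 k) (alpha R n) = if k = n then 1 else 0 := by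
  rw [← coeff_restrictToAxis, restrictToAxis_one_alpha, Polynomial.coeff_X_pow]

theorem coeff_single_zero_succ_alpha_succ (n k : ℕ) :
    coeff (Finsupp.single 0 (k + 1)) (alpha R (n + 1)) = n.choose k := by
  rw [← coeff_restrictToAxis, restrictToAxis_zero_alpha_succ, Polynomial.coeff_mul_X,
    Polynomial.coeff_X_add_one_pow]

end AlphaMatrix

theorem stmt_2_general (R : Type*) [CommSemiring R] (n : ℕ) (hn : 1 ≤ n) :
    coeff (Finsupp.single 0 1) (alpha R n) = 1 ∧
    coeff (Finsupp.single 0 n) (alpha R n) = 1 ∧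
    coeff (Finsupp.single 1 n) (alpha R n) = 1 ∧
    ∀ k : ℕ, k < n → coeff (Finsupp.single 1 k) (alpha R n) = 0 := by
  obtain ⟨m, rfl⟩ := Nat.exists_eq_add_of_le' hn
  refine ⟨?_, ?_, ?_, fun k hk => ?_⟩
  · simpa using coeff_single_zero_succ_alpha_succ R m 0
  · rw [coeff_single_zero_succ_alpha_succ, Nat.choose_self, Nat.cast_one]
  · rw [coeff_single_one_alpha, if_pos rfl]
  · rw [coeff_single_one_alpha, if_neg hk.ne]

/-- For `n ≥ 2`, in `α_n` the coefficient of `X` is `1`, the coefficient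
of `X^n` is `1`, the coefficient of `Y^n` is `1`, and the coefficient of `Y^k` is `0`
for every `0 ≤ k < n`. -/
theorem stmt_2 (n : ℕ) (hn : 2 ≤ n) :
    coeff (Finsupp.single 0 1) (stmtAlpha n) = 1 ∧
    coeff (Finsupp.single 0 n) (stmtAlpha n) = 1 ∧
    coeff (Finsupp.single 1 n) (stmtAlpha n) = 1 ∧
    ∀ k : ℕ, k < n → coeff (Finsupp.single 1 k) (stmtAlpha n) = 0 :=
  stmt_2_general (ZMod 2) n (one_le_two.trans hn)
end

section
/- Let R be an integral domain and k ≥ 1. For every R-algebra automorphism φ of the Laurent polynomial ring A_k = R[s_1^{±1}, …, s_k^{±1}] (the group algebra of ℤ^k over R, with R-basis of monomials X^v for v ∈ ℤ^k), there exist units α_1, …, α_k ∈ Rˣ and a matrix A ∈ GL(k,ℤ) such that φ(X^v) = (∏_{i=1}^k α_i^{v_i}) · X^{A v} for all v ∈ ℤ^k. -/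
/-!
Let `H` be a group in which any nonempty finite sets `S, T`, not both singletons, admit two distinct
pairs in `S × T` whose sums are attained only once. In `R[H]`, a factorisation `f * g = X^s` forces `f`
and `g` to be monomials: each uniquely attained sum of exponents contributes a nonzero coefficient
to `f * g`, so it must be `s`, and two uniquely attained sums cannot coincide. Hence the units of
`R[H]` are exactly the `c X^h` with `c ∈ Rˣ`, that is, `R[H]ˣ ≃ Rˣ × H`. An isomorphism
`R[G] ≃ R[H]` restricted to the monomials `X^g` is therefore a pair of homomorphisms `G → Rˣ` and
`G → H`, and bijectivity passes to the second one. For `G = H = ℤ^k` the first is given by the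
images of the standard basis and the second by an invertible integer matrix.
-/

open AddMonoidAlgebra Multiplicative

section MonomialFactors

variable {R G : Type*} [Semiring R]

theorem exists_eq_single_of_card_support_eq_one {f : R[G]} (hf : f.coeff.support.card = 1) :
    ∃ a c, f = single a c := by
  obtain ⟨a, c, -, hac⟩ := Finsupp.card_support_eq_one'.1 hf
  exact ⟨a, c, coeff_injective hac⟩

variable [Add G]

theorem add_eq_of_uniqueAdd_of_mul_eq_single [NoZeroDivisors R] {f g : R[G]} {a b s : G} {r : R}
    (hfg : f * g = single s r) (ha : a ∈ f.coeff.support) (hb : b ∈ g.coeff.support)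
    (hab : UniqueAdd f.coeff.support g.coeff.support a b) : a + b = s := by
  by_contra hne
  have hcoeff : 0 = f.coeff a * g.coeff b := by
    rw [← coeff_mul_add_of_uniqueAdd hab, hfg, coeff_single, Finsupp.single_eq_of_ne hne]
  exact mul_ne_zero (Finsupp.mem_support_iff.1 ha) (Finsupp.mem_support_iff.1 hb) hcoeff.symm

theorem exists_eq_single_of_mul_eq_single [NoZeroDivisors R] [TwoUniqueSums G] {f g : R[G]}
    {s : G} {r : R} (hr : r ≠ 0) (hfg : f * g = single s r) :
    (∃ a c, f = single a c) ∧ ∃ b d, g = single b d := by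
  have hfg_ne : f * g ≠ 0 := by rwa [hfg, Ne, single_eq_zero]
  have card_pos {h : R[G]} (hh : h ≠ 0) : 0 < h.coeff.support.card := by
    rwa [Finset.card_pos, Finsupp.support_nonempty_iff, Ne, coeff_eq_zero]
  have card_mul_le : f.coeff.support.card * g.coeff.support.card ≤ 1 := by
    by_contra! hlt
    obtain ⟨p, hp, q, hq, hpq, hp_unique, hq_unique⟩ :=
      TwoUniqueSums.uniqueAdd_of_one_lt_card hlt
    rw [Finset.mem_product] at hp hq
    have hp_sum := add_eq_of_uniqueAdd_of_mul_eq_single hfg hp.1 hp.2 hp_unique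
    have hq_sum := add_eq_of_uniqueAdd_of_mul_eq_single hfg hq.1 hq.2 hq_unique
    obtain ⟨hfst, hsnd⟩ := hp_unique hq.1 hq.2 (hq_sum.trans hp_sum.symm)
    exact hpq (Prod.ext hfst.symm hsnd.symm)
  have card_mul : f.coeff.support.card * g.coeff.support.card = 1 :=
    card_mul_le.antisymm <|
      Nat.mul_pos (card_pos (left_ne_zero_of_mul hfg_ne)) (card_pos (right_ne_zero_of_mul hfg_ne))
  obtain ⟨hf, hg⟩ := mul_eq_one.1 card_mul
  exact ⟨exists_eq_single_of_card_support_eq_one hf, exists_eq_single_of_card_support_eq_one hg⟩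

end MonomialFactors

section Units

variable {R G H : Type*} [Semiring R] [Nontrivial R]

theorem units_map_singleHom_injective [AddMonoid G] :
    Function.Injective (Units.map (singleHom (R := R) (M := G))) := by
  intro x y hxy
  have hsingle : single x.1.2.toAdd x.1.1 = single y.1.2.toAdd y.1.1 := congrArg Units.val hxy
  have hx : x.1.1 ≠ 0 := (MulEquiv.prodUnits x).1.ne_zero
  obtain ⟨hexp, hcoeff⟩ | ⟨hzero, -⟩ := single_inj.1 hsingle
  · exact Units.ext (Prod.ext hcoeff hexp)
  · exact absurd hzero hx

variable [NoZeroDivisors R]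

theorem units_map_singleHom_surjective [AddMonoid G] [TwoUniqueSums G] :
    Function.Surjective (Units.map (singleHom (R := R) (M := G))) := by
  intro u
  obtain ⟨⟨a, c, hu⟩, b, d, hu_inv⟩ := exists_eq_single_of_mul_eq_single one_ne_zero u.mul_inv
  have hmul : single (a + b) (c * d) = (single 0 1 : R[G]) := by
    rw [← single_mul_single, ← hu, ← hu_inv, u.mul_inv, one_def]
  have hmul' : single (b + a) (d * c) = (single 0 1 : R[G]) := by
    rw [← single_mul_single, ← hu, ← hu_inv, u.inv_mul, one_def]
  simp only [single_inj, one_ne_zero, and_false, or_false] at hmul hmul'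
  exact ⟨⟨(c, ofAdd a), (d, ofAdd b), Prod.ext hmul.2 hmul.1, Prod.ext hmul'.2 hmul'.1⟩,
    Units.ext hu.symm⟩

variable (R G) in
/-- The units of `R[G]` are the monomials with invertible coefficient and exponent. When `G` is a
group, the source is `Rˣ × Multiplicative G`; it is kept as the units of a product so that the map
is `AddMonoidAlgebra.singleHom` on units. -/
noncomputable def singleUnitsEquiv [AddMonoid G] [TwoUniqueSums G] :
    (R × Multiplicative G)ˣ ≃* R[G]ˣ :=
  .ofBijective (Units.map singleHom) ⟨units_map_singleHom_injective, units_map_singleHom_surjective⟩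

theorem exists_monoidHom_addMonoidHom_eq_single [AddGroup G] [AddMonoid H] [TwoUniqueSums H]
    (f : Multiplicative G →* R[H]) :
    ∃ (χ : Multiplicative G →* Rˣ) (e : G →+ H),
      ∀ g, f (ofAdd g) = single (e g) (χ (ofAdd g) : R) := by
  let ψ : Multiplicative G →* (R × Multiplicative H)ˣ :=
    (singleUnitsEquiv R H).symm.toMonoidHom.comp f.toHomUnits
  refine ⟨(Units.map (.fst R (Multiplicative H))).comp ψ,
    AddMonoidHom.toMultiplicative.symm ((MonoidHom.snd R _).comp ((Units.coeHom _).comp ψ)),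
    fun g => ?_⟩
  exact congrArg Units.val ((singleUnitsEquiv R H).apply_symm_apply (f.toHomUnits (ofAdd g))).symm

end Units

section MonomialLinearMaps

variable {R G H : Type*} [CommSemiring R] {φ : R[G] →ₗ[R] R[H]} {e : G → H} {c : G → R}

theorem injective_of_map_single_eq_single (hφ : Function.Injective φ) (hc : ∀ g, c g ≠ 0)
    (hφe : ∀ g, φ (single g 1) = single (e g) (c g)) : Function.Injective e := by
  intro g g' hgg'
  have hmap : φ (c g' • single g 1) = φ (c g • single g' 1) := by
    rw [map_smul, map_smul, hφe, hφe, hgg', smul_single, smul_single, smul_eq_mul, smul_eq_mul,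
      mul_comm]
  have hsingle := hφ hmap
  simp only [smul_single, smul_eq_mul, mul_one] at hsingle
  exact (single_inj.1 hsingle).elim And.left fun hzero => absurd hzero.1 (hc g')

theorem surjective_of_map_single_eq_single [Nontrivial R] (hφ : Function.Surjective φ)
    (hφe : ∀ g, φ (single g 1) = single (e g) (c g)) : Function.Surjective e := by
  intro h
  by_contra! hne
  have hcoeff (x : R[G]) : (φ x).coeff h = 0 := by
    induction x using induction_linear with
    | zero => simp
    | add x y hx hy => simp [hx, hy]
    | single g r =>
      rw [← mul_one r, ← smul_eq_mul, ← smul_single, map_smul, hφe]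
      simp [(hne g).symm]
  obtain ⟨x, hx⟩ := hφ (single h 1)
  simpa [hx] using hcoeff x

end MonomialLinearMaps

section IntegerLattice

theorem prod_zpow_map_single_one {ι M : Type*} [Fintype ι] [DecidableEq ι] [CommGroup M]
    (χ : Multiplicative (ι → ℤ) →* M) (v : ι → ℤ) :
    ∏ i, χ (ofAdd (Pi.single i 1)) ^ v i = χ (ofAdd v) := by
  simp only [← map_zpow, ← map_prod, ← ofAdd_zsmul, ← ofAdd_sum]
  rw [← pi_eq_sum_univ']

theorem exists_generalLinearGroup_mulVec_eq {n R : Type*} [Fintype n] [DecidableEq n] [CommRing R]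
    (e : (n → R) ≃ₗ[R] (n → R)) :
    ∃ A : Matrix.GeneralLinearGroup n R, ∀ v, (A : Matrix n n R).mulVec v = e v := by
  refine ⟨Matrix.GeneralLinearGroup.toLin.symm (.ofLinearEquiv e), fun v => ?_⟩
  rw [← Matrix.mulVecLin_apply, ← Matrix.GeneralLinearGroup.toLin_apply, MulEquiv.apply_symm_apply]
  rfl

end IntegerLattice

theorem stmt_13_general {R G H : Type*} [CommSemiring R] [NoZeroDivisors R] [Nontrivial R]
    [AddGroup G] [AddMonoid H] [TwoUniqueSums H] (φ : R[G] ≃ₐ[R] R[H]) :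
    ∃ (χ : Multiplicative G →* Rˣ) (e : G ≃+ H),
      ∀ g, φ (single g 1) = single (e g) (χ (ofAdd g) : R) := by
  obtain ⟨χ, e, hφ⟩ :=
    exists_monoidHom_addMonoidHom_eq_single ((φ : R[G] →* R[H]).comp (of R G))
  have e_injective : Function.Injective e :=
    injective_of_map_single_eq_single (φ := φ.toLinearMap) φ.injective
      (fun g => (χ (ofAdd g)).ne_zero) hφ
  have e_surjective : Function.Surjective e :=
    surjective_of_map_single_eq_single (φ := φ.toLinearMap) φ.surjective hφ
  exact ⟨χ, .ofBijective e ⟨e_injective, e_surjective⟩, hφ⟩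

/-- Every `R`-algebra automorphism of the Laurent polynomial ring
`A_k = R[s₁^{±1}, …, s_k^{±1}]` (the group algebra of `ℤ^k` over the integral
domain `R`) is of the form `X^v ↦ (∏ i, αᵢ^{vᵢ}) · X^{A v}` for some units
`α₁, …, α_k ∈ Rˣ` and some `A ∈ GL(k,ℤ)`. -/
theorem stmt_13 {R : Type*} [CommRing R] [IsDomain R] (k : ℕ) (hk : 1 ≤ k)
    (φ : AddMonoidAlgebra R (Fin k → ℤ) ≃ₐ[R] AddMonoidAlgebra R (Fin k → ℤ)) :
    ∃ (α : Fin k → Rˣ) (A : Matrix.GeneralLinearGroup (Fin k) ℤ),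
      ∀ v : Fin k → ℤ,
        φ (AddMonoidAlgebra.single v 1)
          = AddMonoidAlgebra.single ((A : Matrix (Fin k) (Fin k) ℤ).mulVec v)
              ((∏ i, α i ^ v i : Rˣ) : R) := by
  obtain ⟨χ, e, hφ⟩ := stmt_13_general φ
  obtain ⟨A, hA⟩ := exists_generalLinearGroup_mulVec_eq e.toIntLinearEquiv
  refine ⟨fun i => χ (ofAdd (Pi.single i 1)), A, fun v => ?_⟩
  rw [hφ, hA, prod_zpow_map_single_one, AddEquiv.coe_toIntLinearEquiv]
end
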